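/- Let L be a closed line segment in ℝ² and let D = ℝ² ∖ L. Then for every 1 < p < ∞ and δ = 1/p, the fractional (δ,p,p)-Hardy inequality fails in D: for every constant C > 0 there exists u ∈ C₀(D) such that ∫_D |u(x)|^p / dist(x, ∂D) dx > C ∫_D ∫_D |u(x) − u(y)|^p / |x−y|^{2+1} dy dx. -/

import Mathlib

open MeasureTheory Metric Set
open scoped ENNReal NNReal BigOperators

noncomputable section

/-- Euclidean `n`-space. -/
abbrev Eucl (n : ℕ) : Type := EuclideanSpace ℝ (Fin n)

/-- `D` is a `c`-John domain (bounded or unbounded): an open connected set such that each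
pair of points can be joined by a rectifiable curve, parametrized by arc length
(formalized as a `1`-Lipschitz parametrization on `[0, ℓ]`), along which
`dist(γ t, ∂D) ≥ min{t, ℓ - t}/c`. -/
def IsJohnDomain (n : ℕ) (c : ℝ) (D : Set (Eucl n)) : Prop :=
  IsOpen D ∧ IsConnected D ∧
    ∀ x₁ ∈ D, ∀ x₂ ∈ D, ∃ ℓ : ℝ, 0 ≤ ℓ ∧ ∃ γ : ℝ → Eucl n,
      γ 0 = x₁ ∧ γ ℓ = x₂ ∧ (∀ t ∈ Icc (0:ℝ) ℓ, γ t ∈ D) ∧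
      LipschitzOnWith 1 γ (Icc 0 ℓ) ∧
      ∀ t ∈ Icc (0:ℝ) ℓ, min t (ℓ - t) / c ≤ infDist (γ t) (frontier D)

/-- The ball `B(x, τ·dist(x, ∂G))`; by convention, if `∂G = ∅` (i.e. `G = ℝⁿ`)
it is all of `ℝⁿ`. -/
def tauBall (n : ℕ) (τ : ℝ) (G : Set (Eucl n)) (x : Eucl n) : Set (Eucl n) :=
  {y : Eucl n | edist x y < ENNReal.ofReal τ * EMetric.infEdist x (frontier G)}

/-- The fractional kernel `|u x - u y|^p / |x - y|^(n + δp)` as an extended real. -/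
def fracKernel (n : ℕ) (δ p : ℝ) (u : Eucl n → ℝ) (x y : Eucl n) : ℝ≥0∞ :=
  ENNReal.ofReal (|u x - u y| ^ p / dist x y ^ ((n : ℝ) + δ * p))

/-- The `p`-th power of the seminorm `|u|_{W^{δ,p}_τ(G)}`. -/
def fracEnergyTau (n : ℕ) (δ τ p : ℝ) (G : Set (Eucl n)) (u : Eucl n → ℝ) : ℝ≥0∞ :=
  ∫⁻ x in G, ∫⁻ y in tauBall n τ G x, fracKernel n δ p u x y ∂volume ∂volume

/-- The `p`-th power of the seminorm `|u|_{W^{δ,p}(G)}`. -/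
def fracEnergy (n : ℕ) (δ p : ℝ) (G : Set (Eucl n)) (u : Eucl n → ℝ) : ℝ≥0∞ :=
  ∫⁻ x in G, ∫⁻ y in G, fracKernel n δ p u x y ∂volume ∂volume

/-- The fractional `(δ,p)`-capacity of a compact set `K ⊆ G`:
`inf |u|_{W^{δ,p}(G)}^p` over `u ∈ C₀(G)` with `u ≥ 1` on `K`. -/
def fracCap (n : ℕ) (δ p : ℝ) (K G : Set (Eucl n)) : ℝ≥0∞ :=
  ⨅ (u : Eucl n → ℝ) (_ : Continuous u) (_ : HasCompactSupport u) (_ : tsupport u ⊆ G)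
    (_ : ∀ x ∈ K, 1 ≤ u x), fracEnergy n δ p G u

/-- The fractional `(δ,q,p)`-Hardy inequality holds in `G` with constant `C`. -/
def HasFracHardy (n : ℕ) (δ p q C : ℝ) (G : Set (Eucl n)) : Prop :=
  ∀ u : Eucl n → ℝ, Continuous u → HasCompactSupport u → tsupport u ⊆ G →
    (∫⁻ x in G, ENNReal.ofReal
        (|u x| ^ q / infDist x (frontier G) ^ (q * (δ + n * (1/q - 1/p)))) ∂volume)
      ≤ ENNReal.ofReal C * fracEnergy n δ p G u ^ (q / p)

/-- The closed axis-parallel cube with center `z` and half side length `r`. -/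
def cube (n : ℕ) (z : Eucl n) (r : ℝ) : Set (Eucl n) :=
  {x : Eucl n | ∀ i, |x i - z i| ≤ r}

/-- The quantity `|Q|^(-1-δ/n) ∫_Q |u - u_Q|` for the cube `Q = cube n z r`. -/
def aTerm (n : ℕ) (δ : ℝ) (u : Eucl n → ℝ) (z : Eucl n) (r : ℝ) : ℝ :=
  ((volume (cube n z r)).toReal) ^ (-(1:ℝ) - δ / n) *
    ∫ x in cube n z r, |u x - ⨍ y in cube n z r, u y ∂volume| ∂volume

/-- The seminorm `|u|_{A^{δ,p}_κ(G)}`: the supremum, over families `𝒬` of pairwise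
disjoint cubes `Q` (given by center-halfside pairs) with `κQ ⊆ G`, of the `L^p(G)`
norm of `∑_{Q ∈ 𝒬} (|Q|^(-1-δ/n) ∫_Q |u - u_Q|) χ_Q`. -/
def ASeminorm (n : ℕ) (κ δ p : ℝ) (G : Set (Eucl n)) (u : Eucl n → ℝ) : ℝ≥0∞ :=
  ⨆ (𝒬 : Set (Eucl n × ℝ)) (_ : ∀ c ∈ 𝒬, 0 < c.2 ∧ cube n c.1 (κ * c.2) ⊆ G)
    (_ : ∀ c ∈ 𝒬, ∀ c' ∈ 𝒬, c ≠ c' → cube n c.1 c.2 ∩ cube n c'.1 c'.2 = ∅),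
    (∫⁻ x in G,
        (∑' c : 𝒬, (cube n (c : Eucl n × ℝ).1 (c : Eucl n × ℝ).2).indicator
          (fun _ => ENNReal.ofReal (aTerm n δ u (c : Eucl n × ℝ).1 (c : Eucl n × ℝ).2)) x) ^ p
      ∂volume) ^ (1 / p)

/-- `Q` is a closed dyadic cube in `ℝⁿ`. -/
def IsDyadicCube (n : ℕ) (Q : Set (Eucl n)) : Prop :=
  ∃ (k : ℤ) (z : Fin n → ℤ),
    Q = {x : Eucl n | ∀ i, (z i : ℝ) * (2:ℝ) ^ k ≤ x i ∧ x i ≤ ((z i : ℝ) + 1) * (2:ℝ) ^ k}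

/-- `W` is a Whitney decomposition of the proper open set `G`: a countable family of
closed dyadic cubes with pairwise disjoint interiors whose union is `G`, with
`diam Q ≤ dist(Q, ∂G) ≤ 4 diam Q` for each cube `Q ∈ W`. -/
def IsWhitneyDecomposition (n : ℕ) (G : Set (Eucl n)) (W : Set (Set (Eucl n))) : Prop :=
  W.Countable ∧ (∀ Q ∈ W, IsDyadicCube n Q) ∧ ⋃₀ W = G ∧
    (W.Pairwise fun Q R => interior Q ∩ interior R = ∅) ∧
    ∀ Q ∈ W, (∀ x ∈ Q, Metric.diam Q ≤ infDist x (frontier G)) ∧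
      ∃ x ∈ Q, infDist x (frontier G) ≤ 4 * Metric.diam Q

/-- `lam` is an upper Assouad-type covering exponent for `E`: there is `C > 0` such
that for every `x ∈ E` and all `0 < r < R < 2 diam E`, the set `E ∩ B(x,R)` can be
covered by at most `C (R/r)^lam` balls centered in `E` of radius `r`. -/
def UpperAssouadBound (n : ℕ) (E : Set (Eucl n)) (lam : ℝ) : Prop :=
  ∃ C : ℝ, 0 < C ∧ ∀ x ∈ E, ∀ r R : ℝ, 0 < r → r < R →
    ENNReal.ofReal R < 2 * EMetric.diam E →
    ∃ F : Finset (Eucl n), ↑F ⊆ E ∧ (F.card : ℝ) ≤ C * (R / r) ^ lam ∧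
      E ∩ ball x R ⊆ ⋃ y ∈ F, ball y r

/-- The upper Assouad dimension of `E`. -/
def upperAssouadDim (n : ℕ) (E : Set (Eucl n)) : ℝ :=
  sInf {lam : ℝ | 0 ≤ lam ∧ UpperAssouadBound n E lam}

/-- `lam` is a lower Assouad-type exponent for `E`: there is `C > 0` such that for
every `x ∈ E` and all `0 < r < R < 2 diam E`, at least `C (R/r)^lam` balls centered
in `E` of radius `r` are needed to cover `E ∩ B(x,R)`. -/
def LowerAssouadBound (n : ℕ) (E : Set (Eucl n)) (lam : ℝ) : Prop :=
  ∃ C : ℝ, 0 < C ∧ ∀ x ∈ E, ∀ r R : ℝ, 0 < r → r < R →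
    ENNReal.ofReal R < 2 * EMetric.diam E →
    ∀ F : Finset (Eucl n), ↑F ⊆ E → (E ∩ ball x R ⊆ ⋃ y ∈ F, ball y r) →
      C * (R / r) ^ lam ≤ (F.card : ℝ)

/-- The lower Assouad dimension of `E`. -/
def lowerAssouadDim (n : ℕ) (E : Set (Eucl n)) : ℝ :=
  sSup {lam : ℝ | 0 ≤ lam ∧ LowerAssouadBound n E lam}

end

/-!
Scaling heuristics: if the `t`-neighbourhoods of `K` have volume of order `t ^ c` with `c = δ * p`,
then the function that drops linearly from `1` to `0` between the distances `ε` and `2 * ε` from `K`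
has energy at most of order `ε ^ c * ε ^ (-c) = 1`: the kernel
`min(1, |z| / ε) ^ p / |z| ^ (n + c)` has integral of order `ε ^ (-c)`, and only pairs with a point
within distance `2 * ε` of `K` contribute. Subtracting such a function at scale `ε` from the one at
scale `1 / 2` therefore gives test functions supported off `K` whose energy stays bounded as
`ε → 0`. They tend to `1` near `K`, where `dist(·, K) ^ (-c)` is not integrable, so the left side of
the Hardy inequality is unbounded. A segment in `ℝⁿ` has codimension `c = n - 1`.
-/

open Filter Topology

theorem frontier_compl_of_measure_eq_zero {X : Type*} [TopologicalSpace X] [MeasurableSpace X]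
    {μ : Measure X} [μ.IsOpenPosMeasure] {K : Set X} (hK : IsClosed K) (hK₀ : μ K = 0) :
    frontier Kᶜ = K := by
  rw [frontier_compl, hK.frontier_eq, Measure.interior_eq_empty_of_null hK₀, sdiff_empty]

section MinkowskiCodim

variable {X : Type*} [PseudoMetricSpace X] [MeasurableSpace X] {μ : Measure X} {K : Set X} {c : ℝ}

/-- `K` is Minkowski regular of codimension `c`: the measure of its open `t`-neighbourhood is
comparable to `t ^ c` for all `0 < t ≤ 1`. In `ℝⁿ` this says that `K` has `(n - c)`-dimensional
upper and lower Minkowski contents in `(0, ∞)`. -/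
structure HasMinkowskiCodim (μ : Measure X) (K : Set X) (c : ℝ) : Prop where
  exists_measure_thickening_le : ∃ A : ℝ≥0∞, A ≠ ∞ ∧
    ∀ t ∈ Ioc (0 : ℝ) 1, μ (thickening t K) ≤ A * ENNReal.ofReal (t ^ c)
  exists_le_measure_thickening : ∃ B : ℝ≥0∞, B ≠ 0 ∧
    ∀ t ∈ Ioc (0 : ℝ) 1, B * ENNReal.ofReal (t ^ c) ≤ μ (thickening t K)

namespace HasMinkowskiCodim

theorem nonempty (h : HasMinkowskiCodim μ K c) : K.Nonempty := by
  obtain ⟨B, hB, hle⟩ := h.exists_le_measure_thickening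
  rw [nonempty_iff_ne_empty]
  rintro rfl
  simpa [hB] using hle 1 (by simp)

theorem tendsto_measure_thickening (h : HasMinkowskiCodim μ K c) (hc : 0 < c) :
    Tendsto (fun t ↦ μ (thickening t K)) (𝓝[>] 0) (𝓝 0) := by
  obtain ⟨A, hA, hle⟩ := h.exists_measure_thickening_le
  have hpow : Tendsto (fun t : ℝ ↦ t ^ c) (𝓝[>] 0) (𝓝 0) := by
    simpa [Real.zero_rpow hc.ne'] using
      (Real.continuousAt_rpow_const 0 c (Or.inr hc.le)).tendsto.mono_left nhdsWithin_le_nhds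
  have hbound : Tendsto (fun t : ℝ ↦ A * ENNReal.ofReal (t ^ c)) (𝓝[>] 0) (𝓝 0) := by
    simpa using ENNReal.Tendsto.const_mul (ENNReal.tendsto_ofReal hpow) (Or.inr hA)
  refine tendsto_of_tendsto_of_tendsto_of_le_of_le' tendsto_const_nhds hbound
    (Eventually.of_forall fun _ ↦ zero_le) ?_
  filter_upwards [Ioc_mem_nhdsGT one_pos] with t ht using hle t ht

theorem measure_eq_zero (h : HasMinkowskiCodim μ K c) (hc : 0 < c) : μ K = 0 := by
  refine le_antisymm (ge_of_tendsto (h.tendsto_measure_thickening hc) ?_) zero_le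
  filter_upwards [self_mem_nhdsWithin] with t ht
  exact measure_mono (self_subset_thickening ht K)

variable [OpensMeasurableSpace X]

theorem le_setLIntegral_one_div_infDist_rpow {B : ℝ≥0∞} {t R : ℝ} (h : HasMinkowskiCodim μ K c)
    (hc : 0 < c) (hK : IsClosed K) (ht : 0 < t) (htR : t ≤ R)
    (hB : B * ENNReal.ofReal (t ^ c) ≤ μ (thickening t K)) :
    B ≤ ∫⁻ x in thickening t K ∩ {x | 0 < infDist x K ∧ infDist x K ≤ R},
      ENNReal.ofReal (1 / infDist x K ^ c) ∂μ := by
  have hsub : thickening t K \ K ⊆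
      thickening t K ∩ {x | 0 < infDist x K ∧ infDist x K ≤ R} := fun x ⟨hxt, hxK⟩ ↦
    ⟨hxt, (hK.notMem_iff_infDist_pos h.nonempty).1 hxK,
      ((mem_thickening_iff_infDist_lt h.nonempty).1 hxt).le.trans htR⟩
  calc B = ENNReal.ofReal (1 / t ^ c) * (B * ENNReal.ofReal (t ^ c)) := by
        rw [mul_left_comm, ← ENNReal.ofReal_mul (by positivity),
          one_div_mul_cancel (by positivity), ENNReal.ofReal_one, mul_one]
    _ ≤ ENNReal.ofReal (1 / t ^ c) * μ (thickening t K) := by gcongr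
    _ = ∫⁻ _ in thickening t K \ K, ENNReal.ofReal (1 / t ^ c) ∂μ := by
        rw [setLIntegral_const, measure_sdiff_null (h.measure_eq_zero hc)]
    _ ≤ ∫⁻ x in thickening t K \ K, ENNReal.ofReal (1 / infDist x K ^ c) ∂μ := by
        refine setLIntegral_mono' (isOpen_thickening.measurableSet.diff hK.measurableSet)
          fun x hx ↦ ?_
        have hpos := (hsub hx).2.1
        gcongr
        exact ((mem_thickening_iff_infDist_lt h.nonempty).1 hx.1).le
    _ ≤ _ := lintegral_mono_set hsub

/-- Every shell `0 < dist(x, K) < t` carries weight at least `B`, although its measure tends to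
zero; this is impossible for an integrable weight. -/
theorem setLIntegral_one_div_infDist_rpow_eq_top {R : ℝ} (h : HasMinkowskiCodim μ K c) (hc : 0 < c)
    (hK : IsClosed K) (hR : 0 < R) :
    ∫⁻ x in {x | 0 < infDist x K ∧ infDist x K ≤ R},
      ENNReal.ofReal (1 / infDist x K ^ c) ∂μ = ∞ := by
  obtain ⟨B, hB, hle⟩ := h.exists_le_measure_thickening
  by_contra hfin
  have hrestrict : Tendsto
      (μ.restrict {x | 0 < infDist x K ∧ infDist x K ≤ R} ∘ fun t ↦ thickening t K)
      (𝓝[>] 0) (𝓝 0) :=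
    tendsto_of_tendsto_of_tendsto_of_le_of_le tendsto_const_nhds (h.tendsto_measure_thickening hc)
      (fun _ ↦ zero_le) fun _ ↦ Measure.restrict_apply_le _ _
  refine hB (le_antisymm (ge_of_tendsto (tendsto_setLIntegral_zero hfin hrestrict) ?_) zero_le)
  filter_upwards [Ioc_mem_nhdsGT (lt_min one_pos hR)] with t ⟨ht, htR⟩
  rw [Measure.restrict_restrict isOpen_thickening.measurableSet]
  exact h.le_setLIntegral_one_div_infDist_rpow hc hK ht (htR.trans (min_le_right _ _))
    (hle t ⟨ht, htR.trans (min_le_left _ _)⟩)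

theorem exists_lt_setLIntegral_one_div_infDist_rpow {R : ℝ} {M : ℝ≥0∞}
    (h : HasMinkowskiCodim μ K c) (hc : 0 < c) (hK : IsClosed K) (hR : 0 < R) (hM : M ≠ ∞) :
    ∃ r ∈ Ioc 0 R, M < ∫⁻ x in {x | r ≤ infDist x K ∧ infDist x K ≤ R},
      ENNReal.ofReal (1 / infDist x K ^ c) ∂μ := by
  set s : ℕ → Set X := fun k ↦ {x | R / (k + 1) ≤ infDist x K ∧ infDist x K ≤ R} with hs
  have hmono : Monotone s := fun i j hij x hx ↦ ⟨le_trans (by gcongr) hx.1, hx.2⟩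
  have hunion : ⋃ k, s k = {x | 0 < infDist x K ∧ infDist x K ≤ R} := by
    ext x
    simp only [hs, mem_iUnion, mem_ofPred_eq, exists_and_right, and_congr_left_iff]
    refine fun _ ↦ ⟨fun ⟨k, hk⟩ ↦ lt_of_lt_of_le (by positivity) hk, fun hx ↦ ?_⟩
    obtain ⟨k, hk⟩ := exists_nat_one_div_lt (div_pos hx hR)
    exact ⟨k, by rw [lt_div_iff₀ hR, one_div_mul_eq_div] at hk; exact hk.le⟩
  have hsup := setLIntegral_iUnion_of_directed (μ := μ)
    (fun x ↦ ENNReal.ofReal (1 / infDist x K ^ c)) hmono.directed_le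
  rw [hunion, h.setLIntegral_one_div_infDist_rpow_eq_top hc hK hR] at hsup
  obtain ⟨k, hk⟩ := lt_iSup_iff.1 (hsup ▸ hM.lt_top)
  exact ⟨R / (k + 1), ⟨by positivity, div_le_self hR.le (by simp)⟩, hk⟩

end HasMinkowskiCodim

end MinkowskiCodim

section Segment

variable {E : Type*} [NormedAddCommGroup E] [NormedSpace ℝ E]

theorem isCompact_segment (a b : E) : IsCompact (segment ℝ a b) := by
  simpa only [convexHull_pair] using (toFinite {a, b}).isCompact_convexHull ℝ

/-- The point of the line through `a` and `b` at distance `k * r` from `a`; for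
`k ≤ ⌊dist a b / r⌋₊` these points form a maximal `r`-separated subset of the segment. -/
noncomputable def segmentNet (a b : E) (r : ℝ) (k : ℕ) : E :=
  AffineMap.lineMap a b (k * r / dist a b)

variable {a b : E} {r : ℝ}

theorem segmentNet_mem_segment {k : ℕ} (hr : 0 < r) (hk : k < ⌊dist a b / r⌋₊ + 1) :
    segmentNet a b r k ∈ segment ℝ a b := by
  rw [segment_eq_image_lineMap]
  refine mem_image_of_mem _ ⟨by positivity, div_le_one_of_le₀ ?_ dist_nonneg⟩
  rw [← le_div_iff₀ hr]
  exact (Nat.le_floor_iff (by positivity)).1 (Nat.lt_succ_iff.1 hk)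

theorem le_dist_segmentNet (hab : a ≠ b) (hr : 0 < r) {i j : ℕ} (hij : i ≠ j) :
    r ≤ dist (segmentNet a b r i) (segmentNet a b r j) := by
  have hl : 0 < dist a b := dist_pos.2 hab
  have hij' : (1 : ℝ) ≤ |(i : ℝ) - j| := by
    exact_mod_cast Int.one_le_abs (sub_ne_zero.2 (Nat.cast_injective.ne hij : (i : ℤ) ≠ j))
  calc r ≤ |(i : ℝ) - j| * r := le_mul_of_one_le_left hr.le hij'
    _ = dist (segmentNet a b r i) (segmentNet a b r j) := by
      rw [segmentNet, segmentNet, dist_lineMap_lineMap, Real.dist_eq, ← sub_div, ← sub_mul,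
        abs_div, abs_mul, abs_of_pos hl, abs_of_pos hr, div_mul_cancel₀ _ hl.ne']

theorem segment_subset_iUnion_ball_segmentNet (hab : a ≠ b) (hr : 0 < r) :
    segment ℝ a b ⊆ ⋃ k ∈ Finset.range (⌊dist a b / r⌋₊ + 1), ball (segmentNet a b r k) r := by
  have hl : 0 < dist a b := dist_pos.2 hab
  rw [segment_eq_image_lineMap]
  rintro _ ⟨s, ⟨hs0, hs1⟩, rfl⟩
  refine mem_iUnion₂_of_mem (i := ⌊s * dist a b / r⌋₊) ?_ ?_
  · rw [Finset.mem_range, Nat.lt_succ_iff]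
    gcongr
    exact mul_le_of_le_one_left hl.le hs1
  · have hfloor := Nat.floor_le (show 0 ≤ s * dist a b / r by positivity)
    have hlt := Nat.lt_floor_add_one (s * dist a b / r)
    set k : ℝ := (⌊s * dist a b / r⌋₊ : ℝ)
    rw [mem_ball, segmentNet, dist_lineMap_lineMap, Real.dist_eq]
    rw [le_div_iff₀ hr] at hfloor
    rw [div_lt_iff₀ hr] at hlt
    calc |s - k * r / dist a b| * dist a b = |s * dist a b - k * r| := by
          rw [← abs_of_pos hl, ← abs_mul, abs_of_pos hl, sub_mul, div_mul_cancel₀ _ hl.ne']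
      _ < r := by rw [abs_of_nonneg] <;> linarith

variable [MeasurableSpace E] [BorelSpace E] [FiniteDimensional ℝ E] {μ : Measure E}
  [μ.IsAddHaarMeasure] {K : Set E} {ι : Type*} {s : Finset ι} {x : ι → E} {t : ℝ}

theorem addHaar_thickening_le_card_mul (hr : 0 < r) (ht : 0 < t)
    (hK : K ⊆ ⋃ i ∈ s, ball (x i) r) :
    μ (thickening t K) ≤
      ENNReal.ofReal (s.card * (t + r) ^ Module.finrank ℝ E) * μ (ball 0 1) := by
  have hcover : thickening t K ⊆ ⋃ i ∈ s, ball (x i) (t + r) := by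
    intro y hy
    obtain ⟨z, hzK, hyz⟩ := mem_thickening_iff.1 hy
    obtain ⟨i, hi, hz⟩ := mem_iUnion₂.1 (hK hzK)
    refine mem_iUnion₂_of_mem hi (mem_ball.2 ?_)
    linarith [dist_triangle y z (x i), mem_ball.1 hz]
  calc μ (thickening t K) ≤ ∑ i ∈ s, μ (ball (x i) (t + r)) :=
        (measure_mono hcover).trans (measure_biUnion_finset_le _ _)
    _ = _ := by
        simp only [Measure.addHaar_ball_of_pos μ _ (add_pos ht hr), Finset.sum_const, nsmul_eq_mul]
        rw [ENNReal.ofReal_mul (by positivity), ENNReal.ofReal_natCast, mul_assoc]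

theorem card_mul_le_addHaar_thickening (ht : 0 < t) (hK : ∀ i ∈ s, x i ∈ K)
    (hsep : (s : Set ι).Pairwise fun i j ↦ 2 * t ≤ dist (x i) (x j)) :
    ENNReal.ofReal (s.card * t ^ Module.finrank ℝ E) * μ (ball 0 1) ≤ μ (thickening t K) := by
  have hdisj : (s : Set ι).PairwiseDisjoint fun i ↦ ball (x i) t := fun i hi j hj hij ↦
    ball_disjoint_ball (by linarith [hsep hi hj hij])
  calc _ = ∑ i ∈ s, μ (ball (x i) t) := by
        simp only [Measure.addHaar_ball_of_pos μ _ ht, Finset.sum_const, nsmul_eq_mul]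
        rw [ENNReal.ofReal_mul (by positivity), ENNReal.ofReal_natCast, mul_assoc]
    _ = μ (⋃ i ∈ s, ball (x i) t) :=
        (measure_biUnion_finset hdisj fun _ _ ↦ measurableSet_ball).symm
    _ ≤ μ (thickening t K) :=
        measure_mono (iUnion₂_subset fun i hi ↦ ball_subset_thickening (hK i hi) t)

variable (μ) in
theorem hasMinkowskiCodim_segment (hab : a ≠ b) :
    HasMinkowskiCodim μ (segment ℝ a b) (Module.finrank ℝ E - 1) := by
  set d := Module.finrank ℝ E
  have hl : 0 < dist a b := dist_pos.2 hab
  have hpow {t : ℝ} (ht : 0 < t) : t ^ (d - 1 : ℝ) = t ^ d / t := by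
    rw [Real.rpow_sub_one ht.ne', Real.rpow_natCast]
  constructor
  · refine ⟨ENNReal.ofReal ((dist a b + 1) * 2 ^ d) * μ (ball 0 1), by finiteness,
      fun t ⟨ht, ht1⟩ ↦ ?_⟩
    refine (addHaar_thickening_le_card_mul ht ht
      (segment_subset_iUnion_ball_segmentNet hab ht)).trans ?_
    rw [mul_right_comm, ← ENNReal.ofReal_mul (by positivity)]
    refine mul_le_mul_left (ENNReal.ofReal_le_ofReal ?_) _
    rw [hpow ht, Finset.card_range, ← two_mul, mul_pow]
    push_cast
    have hcard : (⌊dist a b / t⌋₊ : ℝ) + 1 ≤ (dist a b + 1) / t := by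
      have := Nat.floor_le (show 0 ≤ dist a b / t by positivity)
      rw [add_div]
      exact add_le_add this ((one_le_div ht).2 ht1)
    calc _ ≤ (dist a b + 1) / t * (2 ^ d * t ^ d) := by gcongr
      _ = _ := by ring
  · refine ⟨ENNReal.ofReal (dist a b / 2) * μ (ball 0 1),
      mul_ne_zero (by simpa using hab) (measure_ball_pos _ _ one_pos).ne', fun t ⟨ht, _⟩ ↦ ?_⟩
    refine le_trans ?_ (card_mul_le_addHaar_thickening ht
      (fun k hk ↦ segmentNet_mem_segment (by positivity : 0 < 2 * t) (Finset.mem_range.1 hk))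
      fun i _ j _ hij ↦ le_dist_segmentNet hab (by positivity) hij)
    rw [mul_right_comm, ← ENNReal.ofReal_mul (by positivity)]
    refine mul_le_mul_left (ENNReal.ofReal_le_ofReal ?_) _
    rw [hpow ht, Finset.card_range]
    push_cast
    calc _ = dist a b / (2 * t) * t ^ d := by field_simp
      _ ≤ _ := by gcongr; exact (Nat.lt_floor_add_one _).le

end Segment

section TruncKernel

theorem lintegral_lintegral_indicator_add_mul_sub {G : Type*} [AddCommGroup G] [MeasurableSpace G]
    [MeasurableAdd₂ G] [MeasurableNeg G] {μ : Measure G} [SFinite μ] [μ.IsAddLeftInvariant]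
    [μ.IsNegInvariant] {S : Set G} (hS : MeasurableSet S) {k : G → ℝ≥0∞} (hk : Measurable k) :
    ∫⁻ x, ∫⁻ y, (S.indicator 1 x + S.indicator 1 y) * k (x - y) ∂μ ∂μ
      = 2 * (μ S * ∫⁻ z, k z ∂μ) := by
  have hind : Measurable (S.indicator (1 : G → ℝ≥0∞)) := measurable_one.indicator hS
  have hfst : ∫⁻ x, ∫⁻ y, S.indicator 1 x * k (x - y) ∂μ ∂μ = μ S * ∫⁻ z, k z ∂μ := by
    have hrow (x : G) : ∫⁻ y, S.indicator 1 x * k (x - y) ∂μ = S.indicator 1 x * ∫⁻ z, k z ∂μ := by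
      rw [lintegral_const_mul _ (by fun_prop), lintegral_sub_left_eq_self]
    simp only [hrow]
    rw [lintegral_mul_const _ hind, lintegral_indicator_one hS]
  have hsnd : ∫⁻ x, ∫⁻ y, S.indicator 1 y * k (x - y) ∂μ ∂μ = μ S * ∫⁻ z, k z ∂μ := by
    rw [lintegral_lintegral_swap (by fun_prop)]
    have hcol (y : G) : ∫⁻ x, S.indicator 1 y * k (x - y) ∂μ = S.indicator 1 y * ∫⁻ z, k z ∂μ := by
      rw [lintegral_const_mul _ (by fun_prop), lintegral_sub_right_eq_self k]
    simp only [hcol]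
    rw [lintegral_mul_const _ hind, lintegral_indicator_one hS]
  rw [two_mul]
  nth_rw 1 [← hfst]
  rw [← hsnd, ← lintegral_add_left (by fun_prop)]
  simp only [add_mul]
  exact lintegral_congr fun x ↦ lintegral_add_left (by fun_prop) _

variable {E : Type*} [NormedAddCommGroup E]

/-- The kernel `min(1, |z| / ε) ^ p / |z| ^ s`, which dominates the fractional kernel of a function
with oscillation at most `1` and Lipschitz constant at most `1 / ε`. -/
noncomputable def truncKernel (p s ε : ℝ) (z : E) : ℝ≥0∞ :=
  ENNReal.ofReal (min 1 (‖z‖ / ε) ^ p / ‖z‖ ^ s)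

variable [MeasurableSpace E] [BorelSpace E]

@[fun_prop]
theorem measurable_truncKernel (p s ε : ℝ) : Measurable (truncKernel p s ε : E → ℝ≥0∞) := by
  unfold truncKernel
  fun_prop

variable [NormedSpace ℝ E] [FiniteDimensional ℝ E] (μ : Measure E) [μ.IsAddHaarMeasure]
  {p s : ℝ}

theorem lintegral_truncKernel_eq (p s : ℝ) {ε : ℝ} (hε : 0 < ε) :
    ∫⁻ z, truncKernel p s ε z ∂μ
      = ENNReal.ofReal (ε ^ (Module.finrank ℝ E - s)) * ∫⁻ z, truncKernel p s 1 z ∂μ := by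
  have hscale (z : E) :
      truncKernel p s ε z = ENNReal.ofReal (ε ^ (-s)) * truncKernel p s 1 (ε⁻¹ • z) := by
    rw [truncKernel, truncKernel, ← ENNReal.ofReal_mul (by positivity), norm_smul, norm_inv,
      Real.norm_of_nonneg hε.le, div_one, ← div_eq_inv_mul,
      Real.div_rpow (norm_nonneg z) hε.le, Real.rpow_neg hε.le]
    congr 1
    have := (Real.rpow_pos_of_pos hε s).ne'
    field_simp
  simp only [hscale]
  rw [lintegral_const_mul' _ _ ENNReal.ofReal_ne_top,
    ← lintegral_map (measurable_truncKernel p s 1) (measurable_const_smul ε⁻¹),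
    Measure.map_addHaar_smul μ (inv_ne_zero hε.ne'), lintegral_smul_measure, smul_eq_mul,
    ← mul_assoc, ← ENNReal.ofReal_mul (by positivity), abs_of_pos (by positivity), inv_pow, inv_inv,
    ← Real.rpow_natCast, ← Real.rpow_add hε, neg_add_eq_sub]

theorem integrableOn_Ioi_pow_mul_min_one_rpow_div_rpow {d : ℕ} (hd : 0 < d) (hs : d < s)
    (hsp : s < d + p) :
    IntegrableOn (fun t : ℝ ↦ t ^ (d - 1) * (min 1 t ^ p / t ^ s)) (Ioi 0) := by
  have hpow (t : ℝ) : t ^ (d - 1) = t ^ (d - 1 : ℝ) := by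
    rw [← Real.rpow_natCast, Nat.cast_pred hd]
  rw [← Ioc_union_Ioi_eq_Ioi zero_le_one]
  refine IntegrableOn.union ?_ ?_
  · have hint : IntegrableOn (fun t : ℝ ↦ t ^ (d - 1 + (p - s))) (Ioc 0 1) := by
      rw [integrableOn_Ioc_iff_integrableOn_Ioo,
        intervalIntegral.integrableOn_Ioo_rpow_iff zero_lt_one]
      linarith
    refine hint.congr_fun (fun t ⟨ht0, ht1⟩ ↦ ?_) measurableSet_Ioc
    simp only [min_eq_right ht1, hpow, Real.rpow_add ht0, Real.rpow_sub ht0]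
  · have hint : IntegrableOn (fun t : ℝ ↦ t ^ (d - 1 - s)) (Ioi 1) :=
      integrableOn_Ioi_rpow_of_lt (by linarith) zero_lt_one
    refine hint.congr_fun (fun t ht ↦ ?_) measurableSet_Ioi
    have ht0 : 0 < t := zero_lt_one.trans ht
    simp only [min_eq_left (mem_Ioi.1 ht).le, hpow, Real.one_rpow, Real.rpow_sub ht0 _ s,
      mul_one_div]

theorem lintegral_truncKernel_one_ne_top (hs : Module.finrank ℝ E < s)
    (hsp : s < Module.finrank ℝ E + p) :
    ∫⁻ z, truncKernel p s 1 z ∂μ ≠ ∞ := by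
  rcases subsingleton_or_nontrivial E with hE | hE
  · have hzero (z : E) : truncKernel p s 1 z = 0 := by
      rw [Module.finrank_zero_of_subsingleton] at hs hsp
      simp [truncKernel, Subsingleton.elim z 0, Real.zero_rpow (by grind : p ≠ 0)]
    simp [hzero]
  · have hint : Integrable (fun z : E ↦ min 1 ‖z‖ ^ p / ‖z‖ ^ s) μ :=
      (integrable_fun_norm_addHaar μ (f := fun t ↦ min 1 t ^ p / t ^ s)).2
        (integrableOn_Ioi_pow_mul_min_one_rpow_div_rpow Module.finrank_pos hs hsp)
    simpa only [truncKernel, div_one] using hint.lintegral_lt_top.ne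

end TruncKernel

section FracEnergy

variable {n : ℕ} {δ p ε : ℝ} {u v : Eucl n → ℝ}

theorem measurable_uncurry_fracKernel (hu : Measurable u) :
    Measurable (Function.uncurry (fracKernel n δ p u)) := by
  unfold Function.uncurry fracKernel
  fun_prop

theorem fracKernel_sub_le (hp : 0 ≤ p) (x y : Eucl n) :
    fracKernel n δ p (u - v) x y ≤ 2 ^ p * (fracKernel n δ p u x y + fracKernel n δ p v x y) := by
  simp only [fracKernel, div_eq_mul_inv, Pi.sub_apply,
    ENNReal.ofReal_mul (Real.rpow_nonneg (abs_nonneg _) p),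
    ← ENNReal.ofReal_rpow_of_nonneg (abs_nonneg _) hp]
  rw [← add_mul, ← mul_assoc]
  gcongr
  refine le_trans ?_ (ENNReal.add_rpow_le_two_rpow_mul_rpow_add_rpow _ _ hp)
  rw [← ENNReal.ofReal_add (abs_nonneg _) (abs_nonneg _), sub_sub_sub_comm]
  gcongr
  exact abs_sub _ _

theorem fracEnergy_sub_le (hp : 0 ≤ p) (hu : Measurable u) (G : Set (Eucl n)) :
    fracEnergy n δ p G (u - v) ≤ 2 ^ p * (fracEnergy n δ p G u + fracEnergy n δ p G v) := by
  have hku := measurable_uncurry_fracKernel (δ := δ) (p := p) hu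
  have htwo : (2 : ℝ≥0∞) ^ p ≠ ∞ := by finiteness
  calc fracEnergy n δ p G (u - v)
      ≤ ∫⁻ x in G, ∫⁻ y in G, 2 ^ p * (fracKernel n δ p u x y + fracKernel n δ p v x y) :=
        lintegral_mono fun x ↦ lintegral_mono fun y ↦ fracKernel_sub_le hp x y
    _ = ∫⁻ x in G, 2 ^ p *
          ((∫⁻ y in G, fracKernel n δ p u x y) + ∫⁻ y in G, fracKernel n δ p v x y) := by
        refine lintegral_congr fun x ↦ ?_
        rw [lintegral_const_mul' _ _ htwo, lintegral_add_left hku.of_uncurry_left]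
    _ = _ := by
        rw [lintegral_const_mul' _ _ htwo, lintegral_add_left hku.lintegral_prod_right]
        rfl

theorem fracKernel_le_indicator_add_mul_truncKernel {S : Set (Eucl n)} (hp : 0 < p)
    (hsupp : Function.support u ⊆ S) (hosc : ∀ x y, |u x - u y| ≤ min 1 (dist x y / ε))
    (x y : Eucl n) :
    fracKernel n δ p u x y ≤
      (S.indicator 1 x + S.indicator 1 y) * truncKernel p (n + δ * p) ε (x - y) := by
  have hker : fracKernel n δ p u x y ≤ truncKernel p (n + δ * p) ε (x - y) := by
    rw [fracKernel, truncKernel, ← dist_eq_norm]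
    gcongr
    exact hosc x y
  by_cases hxy : x ∈ S ∨ y ∈ S
  · refine hker.trans (le_mul_of_one_le_left zero_le ?_)
    rcases hxy with hx | hy
    · simp [hx]
    · simp [hy]
  · obtain ⟨hx, hy⟩ := not_or.1 hxy
    have hux : u x = 0 := Function.notMem_support.1 fun h ↦ hx (hsupp h)
    have huy : u y = 0 := Function.notMem_support.1 fun h ↦ hy (hsupp h)
    simp [fracKernel, hux, huy, Real.zero_rpow hp.ne']

theorem fracEnergy_le_measure_mul_lintegral_truncKernel {S : Set (Eucl n)} (hp : 0 < p)
    (hS : MeasurableSet S) (hsupp : Function.support u ⊆ S)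
    (hosc : ∀ x y, |u x - u y| ≤ min 1 (dist x y / ε)) (G : Set (Eucl n)) :
    fracEnergy n δ p G u
      ≤ 2 * (volume S * ∫⁻ z : Eucl n, truncKernel p (n + δ * p) ε z) :=
  calc fracEnergy n δ p G u ≤ ∫⁻ x, ∫⁻ y, fracKernel n δ p u x y :=
        (setLIntegral_le_lintegral _ _).trans
          (lintegral_mono fun _ ↦ setLIntegral_le_lintegral _ _)
    _ ≤ ∫⁻ x, ∫⁻ y, (S.indicator 1 x + S.indicator 1 y) * truncKernel p (n + δ * p) ε (x - y) :=
        lintegral_mono fun x ↦ lintegral_mono fun y ↦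
          fracKernel_le_indicator_add_mul_truncKernel hp hsupp hosc x y
    _ = _ := lintegral_lintegral_indicator_add_mul_sub hS (measurable_truncKernel _ _ _)

theorem hasFracHardy_self_iff {C : ℝ} {G : Set (Eucl n)} (hp : p ≠ 0) :
    HasFracHardy n δ p p C G ↔ ∀ u : Eucl n → ℝ, Continuous u → HasCompactSupport u →
      tsupport u ⊆ G →
        ∫⁻ x in G, ENNReal.ofReal (|u x| ^ p / infDist x (frontier G) ^ (δ * p))
          ≤ ENNReal.ofReal C * fracEnergy n δ p G u := by
  simp [HasFracHardy, div_self hp, mul_comm p δ]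

end FracEnergy

section Cutoff

variable {X : Type*} [PseudoMetricSpace X] {K : Set X} {ε : ℝ} {x : X}

/-- The piecewise linear function of `dist(x, K)` which is `1` up to distance `ε` and `0` beyond
distance `2 * ε`. -/
noncomputable def cutoff (ε : ℝ) (K : Set X) (x : X) : ℝ :=
  projIcc (0 : ℝ) 1 zero_le_one (2 - infDist x K / ε)

@[fun_prop]
theorem continuous_cutoff (ε : ℝ) (K : Set X) : Continuous (cutoff ε K) :=
  continuous_subtype_val.comp <| continuous_projIcc.comp <|
    continuous_const.sub <| (continuous_infDist_pt K).div_const ε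

theorem cutoff_eq_one (hε : 0 < ε) (hx : infDist x K ≤ ε) : cutoff ε K x = 1 := by
  rw [cutoff, projIcc_of_right_le]
  linarith [(div_le_one hε).2 hx]

theorem cutoff_eq_zero (hε : 0 < ε) (hx : 2 * ε ≤ infDist x K) : cutoff ε K x = 0 := by
  rw [cutoff, projIcc_of_le_left]
  linarith [(le_div_iff₀ hε).2 hx]

theorem support_cutoff_subset (hε : 0 < ε) (hK : K.Nonempty) :
    Function.support (cutoff ε K) ⊆ thickening (2 * ε) K := fun _ hx ↦
  (mem_thickening_iff_infDist_lt hK).2 (not_le.1 fun h ↦ hx (cutoff_eq_zero hε h))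

theorem abs_cutoff_sub_cutoff_le (hε : 0 < ε) (K : Set X) (x y : X) :
    |cutoff ε K x - cutoff ε K y| ≤ min 1 (dist x y / ε) := by
  have hmem (z : X) : cutoff ε K z ∈ Icc 0 1 := Subtype.coe_prop _
  refine le_min (abs_sub_le_of_nonneg_of_le (hmem x).1 (hmem x).2 (hmem y).1 (hmem y).2) ?_
  calc |cutoff ε K x - cutoff ε K y|
      ≤ |(2 - infDist x K / ε) - (2 - infDist y K / ε)| := abs_projIcc_sub_projIcc _
    _ = |infDist x K - infDist y K| / ε := by
        rw [sub_sub_sub_cancel_left, ← sub_div, abs_div, abs_of_pos hε, abs_sub_comm]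
    _ ≤ dist x y / ε := by
        gcongr
        simpa [Real.dist_eq] using (lipschitz_infDist_pt K).dist_le_mul x y

/-- The test function of the counterexample: `1` on `{2 * ε ≤ dist(x, K) ≤ 1 / 2}` and `0` off
`{ε ≤ dist(x, K) ≤ 1}`. -/
noncomputable def shellCutoff (ε : ℝ) (K : Set X) : X → ℝ :=
  cutoff (1 / 2) K - cutoff ε K

@[fun_prop]
theorem continuous_shellCutoff (ε : ℝ) (K : Set X) : Continuous (shellCutoff ε K) :=
  (continuous_cutoff _ K).sub (continuous_cutoff ε K)

theorem shellCutoff_eq_one (hε : 0 < ε) (hx : 2 * ε ≤ infDist x K) (hx' : infDist x K ≤ 1 / 2) :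
    shellCutoff ε K x = 1 := by
  rw [shellCutoff, Pi.sub_apply, cutoff_eq_one one_half_pos hx', cutoff_eq_zero hε hx, sub_zero]

theorem tsupport_shellCutoff_subset (hε : 0 < ε) (hε' : ε ≤ 1 / 2) (K : Set X) :
    tsupport (shellCutoff ε K) ⊆ {x | ε ≤ infDist x K ∧ infDist x K ≤ 1} := by
  refine closure_minimal (Function.support_subset_iff'.2 fun x hx ↦ ?_)
    ((isClosed_le continuous_const (continuous_infDist_pt K)).inter
      (isClosed_le (continuous_infDist_pt K) continuous_const))
  rw [shellCutoff, Pi.sub_apply]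
  by_cases hxε : ε ≤ infDist x K
  · have hx1 : 1 < infDist x K := not_le.1 fun h ↦ hx ⟨hxε, h⟩
    rw [cutoff_eq_zero one_half_pos (by linarith), cutoff_eq_zero hε (by linarith), sub_zero]
  · rw [cutoff_eq_one one_half_pos (by linarith), cutoff_eq_one hε (by linarith), sub_self]

theorem tsupport_shellCutoff_subset_compl (hε : 0 < ε) (hε' : ε ≤ 1 / 2) (K : Set X) :
    tsupport (shellCutoff ε K) ⊆ Kᶜ := fun x hx hxK ↦ by
  linarith [(tsupport_shellCutoff_subset hε hε' K hx).1, infDist_zero_of_mem hxK]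

theorem hasCompactSupport_shellCutoff [ProperSpace X] (hK : IsCompact K) (hne : K.Nonempty)
    (hε : 0 < ε) (hε' : ε ≤ 1 / 2) : HasCompactSupport (shellCutoff ε K) := by
  refine (hK.cthickening (r := 1)).of_isClosed_subset (isClosed_tsupport _) fun x hx ↦ ?_
  rw [mem_cthickening_iff, ENNReal.le_ofReal_iff_toReal_le (infEDist_ne_top hne) zero_le_one]
  exact (tsupport_shellCutoff_subset hε hε' K hx).2

theorem setLIntegral_shell_le_setLIntegral_shellCutoff [MeasurableSpace X] [OpensMeasurableSpace X]
    (μ : Measure X) (hε : 0 < ε) (K : Set X) (p s : ℝ) :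
    ∫⁻ x in {x | 2 * ε ≤ infDist x K ∧ infDist x K ≤ 1 / 2},
        ENNReal.ofReal (1 / infDist x K ^ s) ∂μ
      ≤ ∫⁻ x in Kᶜ, ENNReal.ofReal (|shellCutoff ε K x| ^ p / infDist x K ^ s) ∂μ := by
  have hd := (continuous_infDist_pt K).measurable
  refine le_trans (setLIntegral_mono' ((measurableSet_le measurable_const hd).inter
    (measurableSet_le hd measurable_const)) fun x hx ↦ ?_) (lintegral_mono_set fun x hx hxK ↦ ?_)
  · rw [shellCutoff_eq_one hε hx.1 hx.2, abs_one, Real.one_rpow]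
  · linarith [hx.1, infDist_zero_of_mem hxK]

end Cutoff

section Failure

variable {n : ℕ} {δ p : ℝ} {K : Set (Eucl n)}

theorem exists_fracEnergy_cutoff_le (hK : HasMinkowskiCodim volume K (δ * p)) (hδ : 0 < δ)
    (hδ' : δ < 1) (hp : 0 < p) (G : Set (Eucl n)) :
    ∃ M ≠ ∞, ∀ ε ∈ Ioc (0 : ℝ) (1 / 2), fracEnergy n δ p G (cutoff ε K) ≤ M := by
  obtain ⟨A, hA, hle⟩ := hK.exists_measure_thickening_le
  set I := ∫⁻ z : Eucl n, truncKernel p (n + δ * p) 1 z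
  have hI : I ≠ ∞ := lintegral_truncKernel_one_ne_top volume
    (by rw [finrank_euclideanSpace_fin]; nlinarith) (by rw [finrank_euclideanSpace_fin]; nlinarith)
  refine ⟨2 * (A * ENNReal.ofReal (2 ^ (δ * p)) * I), by finiteness, fun ε ⟨hε, hε'⟩ ↦ ?_⟩
  refine (fracEnergy_le_measure_mul_lintegral_truncKernel hp isOpen_thickening.measurableSet
    (support_cutoff_subset hε hK.nonempty) (abs_cutoff_sub_cutoff_le hε K) G).trans ?_
  refine mul_le_mul_right ?_ _
  rw [lintegral_truncKernel_eq volume _ _ hε, finrank_euclideanSpace_fin, sub_add_cancel_left]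
  calc _ ≤ A * ENNReal.ofReal ((2 * ε) ^ (δ * p)) * (ENNReal.ofReal (ε ^ (-(δ * p))) * I) := by
        gcongr
        exact hle _ ⟨by positivity, by linarith⟩
    _ = A * ENNReal.ofReal (2 ^ (δ * p)) * I *
          ENNReal.ofReal (ε ^ (δ * p) * ε ^ (-(δ * p))) := by
        rw [Real.mul_rpow zero_le_two hε.le, ENNReal.ofReal_mul (by positivity),
          ENNReal.ofReal_mul (by positivity)]
        ring
    _ = A * ENNReal.ofReal (2 ^ (δ * p)) * I := by
        rw [← Real.rpow_add hε, add_neg_cancel, Real.rpow_zero, ENNReal.ofReal_one, mul_one]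

theorem exists_fracEnergy_shellCutoff_le (hK : HasMinkowskiCodim volume K (δ * p)) (hδ : 0 < δ)
    (hδ' : δ < 1) (hp : 0 < p) (G : Set (Eucl n)) :
    ∃ M ≠ ∞, ∀ ε ∈ Ioc (0 : ℝ) (1 / 2), fracEnergy n δ p G (shellCutoff ε K) ≤ M := by
  obtain ⟨M, hM, hle⟩ := exists_fracEnergy_cutoff_le hK hδ hδ' hp G
  refine ⟨2 ^ p * (M + M), by finiteness, fun ε hε ↦ ?_⟩
  refine (fracEnergy_sub_le hp.le (continuous_cutoff _ K).measurable G).trans ?_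
  gcongr
  exacts [hle _ (by norm_num), hle ε hε]

theorem statement18_general (hK : IsCompact K) (hcodim : HasMinkowskiCodim volume K (δ * p))
    (hδ : 0 < δ) (hδ' : δ < 1) (hp : 0 < p) (C : ℝ) : ¬ HasFracHardy n δ p p C Kᶜ := by
  have hc : 0 < δ * p := mul_pos hδ hp
  obtain ⟨M, hM, henergy⟩ := exists_fracEnergy_shellCutoff_le hcodim hδ hδ' hp Kᶜ
  obtain ⟨r, ⟨hr, hr'⟩, hlt⟩ := hcodim.exists_lt_setLIntegral_one_div_infDist_rpow hc hK.isClosed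
    one_half_pos (ENNReal.mul_ne_top (ENNReal.ofReal_ne_top (r := C)) hM)
  obtain ⟨ε, rfl⟩ : ∃ ε, r = 2 * ε := ⟨r / 2, by ring⟩
  have hε : 0 < ε := by linarith
  have hε' : ε ≤ 1 / 2 := by linarith
  rw [hasFracHardy_self_iff hp.ne',
    frontier_compl_of_measure_eq_zero hK.isClosed (hcodim.measure_eq_zero hc)]
  intro hardy
  refine hlt.not_ge ?_
  calc _ ≤ ∫⁻ x in Kᶜ, ENNReal.ofReal (|shellCutoff ε K x| ^ p / infDist x K ^ (δ * p)) :=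
        setLIntegral_shell_le_setLIntegral_shellCutoff volume hε K p (δ * p)
    _ ≤ ENNReal.ofReal C * fracEnergy n δ p Kᶜ (shellCutoff ε K) :=
        hardy _ (continuous_shellCutoff ε K)
          (hasCompactSupport_shellCutoff hK hcodim.nonempty hε hε')
          (tsupport_shellCutoff_subset_compl hε hε' K)
    _ ≤ ENNReal.ofReal C * M := by
        gcongr
        exact henergy ε ⟨hε, hε'⟩

theorem not_hasFracHardy_compl_segment {a b : Eucl n} (hab : a ≠ b) (hδ : 0 < δ) (hδ' : δ < 1)
    (hp : 0 < p) (hδp : δ * p = n - 1) (C : ℝ) : ¬ HasFracHardy n δ p p C (segment ℝ a b)ᶜ := by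
  refine statement18_general (isCompact_segment a b) ?_ hδ hδ' hp C
  simpa only [hδp, finrank_euclideanSpace_fin] using hasMinkowskiCodim_segment volume hab

end Failure

/-- Failure of the fractional `(1/p, p, p)`-Hardy inequality in the
complement of a line segment: let `L ⊆ ℝ²` be a closed line segment and
`D = ℝ² ∖ L`. For every `1 < p < ∞` and `δ = 1/p`, and for every constant `C > 0`,
there is `u ∈ C₀(D)` with
`∫_D |u x|^p / dist(x,∂D) dx > C ∫_D ∫_D |u x - u y|^p / |x-y|^3 dy dx`. -/
theorem statement18 (a b : Eucl 2) (hab : a ≠ b) (p : ℝ) (hp : 1 < p) :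
    ∀ C : ℝ, 0 < C →
      ∃ u : Eucl 2 → ℝ, Continuous u ∧ HasCompactSupport u ∧
        tsupport u ⊆ (segment ℝ a b)ᶜ ∧
        ENNReal.ofReal C * fracEnergy 2 (1 / p) p (segment ℝ a b)ᶜ u
          < ∫⁻ x in (segment ℝ a b)ᶜ,
              ENNReal.ofReal
                (|u x| ^ p / infDist x (frontier (segment ℝ a b)ᶜ)) ∂volume := by
  intro C _
  have hp₀ : 0 < p := one_pos.trans hp
  simpa [hasFracHardy_self_iff hp₀.ne', hp₀.ne'] using
    not_hasFracHardy_compl_segment hab (one_div_pos.2 hp₀) ((div_lt_one hp₀).2 hp) hp₀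
      (by norm_num [hp₀.ne']) C
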